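/- Let r ≥ 1 and let [a₁:b₁],…,[a_r:b_r] be pairwise distinct points of ℙ¹(K), giving r pairwise disjoint lines of one ruling of the smooth quadric Q = V(x₀x₃ − x₁x₂) ⊂ ℙ³ with ideals Pᵢ = (bᵢx₀ − aᵢx₁, bᵢx₂ − aᵢx₃). Then the Hilbert function of the Hartshorne–Rao module M(C) of the union C of these lines is symmetric: dim_K [M(C)]_t = dim_K [M(C)]_{r−2−t} for every integer t (components in degrees where the defining cokernel is zero, in particular all negative degrees, being zero). -/

import Mathlib

/-!
The degree-`t` part of `M(C)` has dimension `(t + 1) * (r - (t + 1))` (truncated at zero), which is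
visibly invariant under `t ↦ r - 2 - t`.

Indeed `(s, w) ↦ (aᵢ s, bᵢ s, aᵢ w, bᵢ w)` parametrizes the `i`-th line and identifies `R / Pᵢ` with
`K[s, w]`. A monomial of degree `t` in `R` becomes `aᵢ ^ e * bᵢ ^ (t - e)` times
`s ^ k * w ^ (t - k)`, and all pairs `0 ≤ e, k ≤ t` occur. So after splitting the degree-`t` part of
`⊕ R / Pᵢ` according to the monomial `s ^ k * w ^ (t - k)`, the cokernel becomes `t + 1` copies of
the cokernel of the evaluation of binary forms of degree `t` at the `r` points `[aᵢ : bᵢ]`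
(`finrank_HRcomp`). Evaluation has rank `min (t + 1) r`: for `t + 1 ≤ r` by the projective
Vandermonde determinant, and beyond that because forms of degree `r - 1` already separate the points
(`finrank_quotient_valSpace`).
-/

open MvPolynomial Module

noncomputable section

variable {K : Type} [Field K]

abbrev Rp (K : Type) [Field K] := MvPolynomial (Fin 4) K

/-- The ideal of the line `λ_{[a:b]}` of one ruling of the quadric
`Q = V(x₀x₃ - x₁x₂)`. -/
def quadLine (a b : K) : Ideal (Rp K) :=
  Ideal.span {C b * X 0 - C a * X 1, C b * X 2 - C a * X 3}

/-- The product of the coordinate rings of the lines. -/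
abbrev Dmod (K : Type) [Field K] {ι : Type} (P : ι → Ideal (Rp K)) :=
  (i : ι) → (Rp K ⧸ P i)

/-- The natural map `R → ⊕ᵢ R/Pᵢ`. -/
def Phi {ι : Type} (P : ι → Ideal (Rp K)) : Rp K →ₗ[Rp K] Dmod K P :=
  LinearMap.pi fun i => (P i).mkQ

/-- The Hartshorne–Rao module of the union of the (disjoint) lines with ideals `Pᵢ`:
the cokernel of `R → ⊕ᵢ R/Pᵢ`. -/
abbrev HRmod {ι : Type} (P : ι → Ideal (Rp K)) :=
  Dmod K P ⧸ LinearMap.range (Phi P)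

/-- The degree-`t` component `[M(C)]_t = coker([R]_t → ⊕ᵢ [R/Pᵢ]_t)` of the
Hartshorne–Rao module, realized as a `K`-subspace of the cokernel module. -/
def HRcomp {ι : Type} (P : ι → Ideal (Rp K)) (t : ℕ) : Submodule K (HRmod P) :=
  Submodule.map ((LinearMap.range (Phi P)).mkQ.restrictScalars K)
    (Submodule.pi Set.univ fun i =>
      Submodule.map (((P i).mkQ).restrictScalars K) (homogeneousSubmodule (Fin 4) K t))

/-- `dim_K [M(C)]_t` for `t : ℤ`, zero in negative degrees. -/
def HRdim {ι : Type} (P : ι → Ideal (Rp K)) (t : ℤ) : ℕ :=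
  if 0 ≤ t then finrank K (HRcomp P t.toNat) else 0

/-! ### Evaluation along a line of the ruling -/

/-- The coordinate ring map of the parametrization
`(s, w) ↦ (a s, b s, a w, b w)` of the line `λ_{[a:b]}`. -/
def lineEval (a b : K) : Rp K →ₐ[K] MvPolynomial (Fin 2) K :=
  aeval ![C a * X 0, C b * X 0, C a * X 1, C b * X 1]

/-- The exponent of the monomial `s ^ k * w ^ (t - k)`. -/
def expo (t k : ℕ) : Fin 2 →₀ ℕ := Finsupp.single 0 k + Finsupp.single 1 (t - k)

lemma lineEval_monomial (a b : K) (m : Fin 4 →₀ ℕ) (c : K) :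
    lineEval a b (monomial m c) =
      monomial (Finsupp.single 0 (m 0 + m 1) + Finsupp.single 1 (m 2 + m 3))
        (c * (a ^ (m 0 + m 2) * b ^ (m 1 + m 3))) := by
  rw [lineEval, aeval_monomial, Finsupp.prod_fintype _ _ (by simp)]
  have h : monomial (Finsupp.single 0 (m 0 + m 1) + Finsupp.single 1 (m 2 + m 3))
        (c * (a ^ (m 0 + m 2) * b ^ (m 1 + m 3))) =
      C (c * (a ^ (m 0 + m 2) * b ^ (m 1 + m 3))) *
        ((X 0 : MvPolynomial (Fin 2) K) ^ (m 0 + m 1) * X 1 ^ (m 2 + m 3)) := by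
    rw [X_pow_eq_monomial, X_pow_eq_monomial, monomial_mul, C_mul_monomial]
    simp
  rw [h]
  simp [Fin.prod_univ_four, algebraMap_eq]
  ring

lemma lineEval_eq_zero {a b : K} {f : Rp K} (hf : f ∈ quadLine a b) :
    lineEval a b f = 0 := by
  have : quadLine a b ≤ RingHom.ker (lineEval a b).toRingHom := by
    rw [quadLine, Ideal.span_le]
    rintro g (rfl | rfl) <;> simp [lineEval, RingHom.mem_ker, algebraMap_eq] <;> ring
  exact this hf

/-- If `c a + d b = 1`, then `s ↦ c x₀ + d x₁`, `w ↦ c x₂ + d x₃` inverts `lineEval a b`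
modulo the ideal of the line. -/
def lineLift (c d : K) : MvPolynomial (Fin 2) K →ₐ[K] Rp K :=
  aeval ![C c * X 0 + C d * X 1, C c * X 2 + C d * X 3]

lemma exists_comb_eq_one {a b : K} (h : (a, b) ≠ (0, 0)) : ∃ c d : K, c * a + d * b = 1 := by
  by_cases ha : a = 0
  · have hb : b ≠ 0 := by rintro rfl; exact h (by rw [ha])
    exact ⟨0, b⁻¹, by simp [hb]⟩
  · exact ⟨a⁻¹, 0, by simp [ha]⟩

lemma lineEval_lineLift {a b c d : K} (h : c * a + d * b = 1) (f : MvPolynomial (Fin 2) K) :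
    lineEval a b (lineLift c d f) = f := by
  have hC : (C c * C a + C d * C b : MvPolynomial (Fin 2) K) = 1 := by
    rw [← C_mul, ← C_mul, ← C_add, h, C_1]
  have : (lineEval a b).comp (lineLift c d) = AlgHom.id K _ := by
    apply algHom_ext
    intro i
    fin_cases i
    · simp [lineEval, lineLift, algebraMap_eq]
      linear_combination X 0 * hC
    · simp [lineEval, lineLift, algebraMap_eq]
      linear_combination X 1 * hC
  exact DFunLike.congr_fun this f

lemma lineLift_lineEval {a b c d : K} (h : c * a + d * b = 1) (f : Rp K) :
    lineLift c d (lineEval a b f) - f ∈ quadLine a b := by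
  have hC : (C c * C a + C d * C b : Rp K) = 1 := by
    rw [← C_mul, ← C_mul, ← C_add, h, C_1]
  have h0 : C b * X 0 - C a * X 1 ∈ quadLine a b := Ideal.subset_span (by simp)
  have h1 : C b * X 2 - C a * X 3 ∈ quadLine a b := Ideal.subset_span (by simp)
  have : (Ideal.Quotient.mkₐ K (quadLine a b)).comp
      ((lineLift c d).comp (lineEval a b)) = Ideal.Quotient.mkₐ K (quadLine a b) := by
    apply algHom_ext
    intro i
    simp only [AlgHom.comp_apply, Ideal.Quotient.mkₐ_eq_mk]
    rw [Ideal.Quotient.mk_eq_mk_iff_sub_mem]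
    fin_cases i
    · convert Ideal.mul_mem_left _ (-C d) h0 using 1
      simp [lineEval, lineLift, algebraMap_eq]
      linear_combination X 0 * hC
    · convert Ideal.mul_mem_left _ (C c) h0 using 1
      simp [lineEval, lineLift, algebraMap_eq]
      linear_combination X 1 * hC
    · convert Ideal.mul_mem_left _ (-C d) h1 using 1
      simp [lineEval, lineLift, algebraMap_eq]
      linear_combination X 2 * hC
    · convert Ideal.mul_mem_left _ (C c) h1 using 1
      simp [lineEval, lineLift, algebraMap_eq]
      linear_combination X 3 * hC
  rw [← Ideal.Quotient.mk_eq_mk_iff_sub_mem]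
  exact DFunLike.congr_fun this f

lemma mem_quadLine_of_lineEval {a b : K} (h : (a, b) ≠ (0, 0)) {f : Rp K}
    (hf : lineEval a b f = 0) : f ∈ quadLine a b := by
  obtain ⟨c, d, hcd⟩ := exists_comb_eq_one h
  have := lineLift_lineEval hcd f
  rw [hf, map_zero, zero_sub] at this
  exact neg_mem_iff.mp this

lemma lineEval_isHomogeneous {a b : K} {f : Rp K} {t : ℕ} (hf : f.IsHomogeneous t) :
    (lineEval a b f).IsHomogeneous t := by
  have := hf.aeval (n := 1) ![(C a * X 0 : MvPolynomial (Fin 2) K), C b * X 0, C a * X 1, C b * X 1]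
    (fun i => by fin_cases i <;> exact isHomogeneous_C_mul_X _ _)
  rw [one_mul] at this
  exact this

lemma lineLift_isHomogeneous {c d : K} {f : MvPolynomial (Fin 2) K} {t : ℕ}
    (hf : f.IsHomogeneous t) : (lineLift c d f).IsHomogeneous t := by
  have := hf.aeval (n := 1) ![(C c * X 0 + C d * X 1 : Rp K), C c * X 2 + C d * X 3]
    (fun i => by fin_cases i <;> exact (isHomogeneous_C_mul_X _ _).add (isHomogeneous_C_mul_X _ _))
  rw [one_mul] at this
  exact this

lemma expo_injective {t k l : ℕ} (h : expo t k = expo t l) : k = l := by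
  simpa [expo] using DFunLike.congr_fun h 0

lemma expo_degree {t k : ℕ} (hk : k ≤ t) : (expo t k).degree = t := by
  simp [expo, Finsupp.degree_eq_sum]; omega

/-- Two binary forms of degree `t` agree once their coefficients at all `s ^ k * w ^ (t - k)` do. -/
lemma binary_form_ext {f g : MvPolynomial (Fin 2) K} {t : ℕ} (hf : f.IsHomogeneous t)
    (hg : g.IsHomogeneous t) (h : ∀ k : Fin (t + 1), coeff (expo t k) f = coeff (expo t k) g) :
    f = g := by
  ext m
  by_cases hm : m.degree = t
  · have hs : m 0 + m 1 = t := by simpa [Finsupp.degree_eq_sum] using hm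
    have : m = expo t (m 0) := by
      ext i
      fin_cases i
      · simp [expo]
      · simp [expo]; omega
    have h' := h ⟨m 0, by omega⟩
    rw [this]
    exact h'
  · rw [hf.coeff_eq_zero hm, hg.coeff_eq_zero hm]

/-! ### Values of binary forms at the points of the projective line -/

section Points

variable {r : ℕ}

/-- The values at the points `(aᵢ, bᵢ)` of the monomial of bidegree `(e, t - e)`. -/
def valVec (a b : Fin r → K) (t e : ℕ) : Fin r → K := fun i => a i ^ e * b i ^ (t - e)

/-- The space of value vectors at the points `(aᵢ, bᵢ)` of binary forms of degree `t`. -/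
def valSpace (a b : Fin r → K) (t : ℕ) : Submodule K (Fin r → K) :=
  Submodule.span K (Set.range fun e : Fin (t + 1) => valVec a b t e)

lemma valVec_mem (a b : Fin r → K) {t e : ℕ} (he : e ≤ t) : valVec a b t e ∈ valSpace a b t :=
  Submodule.subset_span ⟨⟨e, by omega⟩, rfl⟩

/-- At most `r` monomials take linearly independent values: the first `t + 1` points give a
projective Vandermonde matrix. -/
lemma valVec_linearIndependent {a b : Fin r → K}
    (hdist : ∀ i j, i ≠ j → a i * b j - a j * b i ≠ 0) {t : ℕ} (ht : t + 1 ≤ r) :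
    LinearIndependent K (fun e : Fin (t + 1) => valVec a b t e) := by
  have hdet : (Matrix.projVandermonde (fun i => a (Fin.castLE ht i))
      (fun i => b (Fin.castLE ht i))).det ≠ 0 := by
    rw [Matrix.det_projVandermonde]
    refine Finset.prod_ne_zero_iff.mpr fun i _ => Finset.prod_ne_zero_iff.mpr fun j hj => ?_
    refine hdist _ _ fun h => ?_
    have hij : i < j := by simpa using hj
    have := Fin.castLE_injective ht h
    omega
  apply LinearIndependent.of_comp (LinearMap.funLeft K K (Fin.castLE ht))
  have hcol : (LinearMap.funLeft K K (Fin.castLE ht)) ∘ (fun e : Fin (t + 1) => valVec a b t e) =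
      (Matrix.projVandermonde (fun i => a (Fin.castLE ht i))
        (fun i => b (Fin.castLE ht i))).col := by
    ext e i
    simp [valVec, Matrix.col, Matrix.projVandermonde_apply, LinearMap.funLeft_apply, Fin.val_rev]
  rw [hcol]
  exact Matrix.linearIndependent_cols_of_det_ne_zero hdet

lemma finrank_valSpace {a b : Fin r → K}
    (hdist : ∀ i j, i ≠ j → a i * b j - a j * b i ≠ 0) {t : ℕ} (ht : t + 1 ≤ r) :
    finrank K (valSpace a b t) = t + 1 := by
  rw [valSpace, finrank_span_eq_card (valVec_linearIndependent hdist ht), Fintype.card_fin]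

lemma mul_mem_valSpace (a b : Fin r → K) {t : ℕ} {v : Fin r → K} (hv : v ∈ valSpace a b t) :
    a * v ∈ valSpace a b (t + 1) ∧ b * v ∈ valSpace a b (t + 1) := by
  constructor
  · have : valSpace a b t ≤ (valSpace a b (t + 1)).comap (LinearMap.mulLeft K a) := by
      rw [valSpace, Submodule.span_le]
      rintro _ ⟨e, rfl⟩
      have : a * valVec a b t e = valVec a b (t + 1) (e + 1) := by
        ext i
        simp only [valVec, Pi.mul_apply, Nat.add_sub_add_right]
        ring
      simpa [this] using valVec_mem a b (by omega : (e : ℕ) + 1 ≤ t + 1)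
    exact this hv
  · have : valSpace a b t ≤ (valSpace a b (t + 1)).comap (LinearMap.mulLeft K b) := by
      rw [valSpace, Submodule.span_le]
      rintro _ ⟨e, rfl⟩
      have : b * valVec a b t e = valVec a b (t + 1) e := by
        ext i
        have : t + 1 - (e : ℕ) = (t - e) + 1 := by omega
        simp only [valVec, Pi.mul_apply, this]
        ring
      simpa [this] using valVec_mem a b (by omega : (e : ℕ) ≤ t + 1)
    exact this hv

/-- If the forms of degree `t` separate the points, so do those of degree `t + 1`: multiply the
form isolating the `i`-th point by a coordinate not vanishing there. -/
lemma valSpace_succ_eq_top {a b : Fin r → K} (hnz : ∀ i, (a i, b i) ≠ (0, 0)) {t : ℕ}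
    (h : valSpace a b t = ⊤) : valSpace a b (t + 1) = ⊤ := by
  rw [eq_top_iff]
  intro v _
  rw [pi_eq_sum_univ v]
  refine Submodule.sum_mem _ fun i _ => Submodule.smul_mem _ _ ?_
  obtain ⟨c, d, hcd⟩ := exists_comb_eq_one (hnz i)
  have hm := mul_mem_valSpace a b (t := t) (v := fun j => if i = j then 1 else 0) (by simp [h])
  convert Submodule.add_mem _ (Submodule.smul_mem _ c hm.1) (Submodule.smul_mem _ d hm.2) using 1
  ext j
  by_cases hij : i = j
  · subst hij; simp [hcd]
  · simp [hij]

lemma valSpace_eq_top {a b : Fin r → K} (hnz : ∀ i, (a i, b i) ≠ (0, 0))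
    (hdist : ∀ i j, i ≠ j → a i * b j - a j * b i ≠ 0) (hr : 1 ≤ r) {t : ℕ} (ht : r ≤ t + 1) :
    valSpace a b t = ⊤ := by
  obtain ⟨s, rfl⟩ : ∃ s, r = s + 1 := ⟨r - 1, by omega⟩
  have hst : s ≤ t := by omega
  induction t, hst using Nat.le_induction with
  | base =>
    apply Submodule.eq_top_of_finrank_eq
    rw [finrank_valSpace hdist le_rfl, finrank_fin_fun]
  | succ t hst ih => exact valSpace_succ_eq_top hnz (ih (by omega))

lemma finrank_quotient_valSpace {a b : Fin r → K} (hnz : ∀ i, (a i, b i) ≠ (0, 0))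
    (hdist : ∀ i j, i ≠ j → a i * b j - a j * b i ≠ 0) (hr : 1 ≤ r) (t : ℕ) :
    finrank K ((Fin r → K) ⧸ valSpace a b t) = r - (t + 1) := by
  rw [Submodule.finrank_quotient, finrank_fin_fun]
  rcases le_total (t + 1) r with h | h
  · rw [finrank_valSpace hdist h]
  · rw [valSpace_eq_top hnz hdist hr h, finrank_top, finrank_fin_fun]
    omega

end Points

/-! ### The Hilbert function -/

/-- A linear map `T` that kills `ker q` computes the dimension of `q(N)`, provided it maps `N`
onto its target and its kernel on `N` lies in `ker q`. -/
lemma finrank_map_eq_of_ker {D M F : Type} [AddCommGroup D] [Module K D] [AddCommGroup M]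
    [Module K M] [AddCommGroup F] [Module K F] (N : Submodule K D) (q : D →ₗ[K] M)
    (T : D →ₗ[K] F) (h1 : ∀ x, q x = 0 → T x = 0) (h2 : ∀ x ∈ N, T x = 0 → q x = 0)
    (h3 : ∀ y, ∃ x ∈ N, T x = y) : finrank K (N.map q) = finrank K F := by
  have hker : LinearMap.ker (q.domRestrict N) = LinearMap.ker (T.domRestrict N) := by
    ext x
    simp only [LinearMap.mem_ker, LinearMap.domRestrict_apply]
    exact ⟨h1 _, h2 _ x.2⟩
  have hsurj : Function.Surjective (T.domRestrict N) := fun y => by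
    obtain ⟨x, hx, hxy⟩ := h3 y
    exact ⟨⟨x, hx⟩, hxy⟩
  rw [← LinearMap.range_domRestrict]
  exact ((q.domRestrict N).quotKerEquivRange.symm.trans
    ((Submodule.quotEquivOfEq _ _ hker).trans
      ((T.domRestrict N).quotKerEquivOfSurjective hsurj))).finrank_eq

section Hilbert

variable {r : ℕ}

/-- The isomorphism of the coordinate ring of `λ_{[a:b]}` with `K[s, w]`, as a map. -/
def quotEval (a b : K) : (Rp K ⧸ quadLine a b) →ₗ[K] MvPolynomial (Fin 2) K :=
  (Ideal.Quotient.liftₐ (quadLine a b) (lineEval a b) fun _ => lineEval_eq_zero).toLinearMap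

lemma quotEval_mk (a b : K) (f : Rp K) :
    quotEval a b (Submodule.Quotient.mk f) = lineEval a b f := rfl

/-- The vector of coefficients at `s ^ k * w ^ (t - k)` of the components on the `r` lines. -/
def coeffVec (a b : Fin r → K) (t k : ℕ) :
    Dmod K (fun i => quadLine (a i) (b i)) →ₗ[K] (Fin r → K) :=
  LinearMap.pi fun i => (lcoeff K (expo t k)).comp ((quotEval (a i) (b i)).comp
    (LinearMap.proj i))

/-- The coefficient vectors in degree `t`, modulo value vectors of binary forms of degree `t`. -/
def coeffClass (a b : Fin r → K) (t : ℕ) :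
    Dmod K (fun i => quadLine (a i) (b i)) →ₗ[K] (Fin (t + 1) → (Fin r → K) ⧸ valSpace a b t) :=
  LinearMap.pi fun k => (valSpace a b t).mkQ.comp (coeffVec a b t k)

lemma coeffClass_eq_zero_iff (a b : Fin r → K) (t : ℕ)
    (x : Dmod K (fun i => quadLine (a i) (b i))) :
    coeffClass a b t x = 0 ↔ ∀ k : Fin (t + 1), coeffVec a b t k x ∈ valSpace a b t := by
  rw [funext_iff]
  exact forall_congr' fun k => Submodule.Quotient.mk_eq_zero _

/-- A monomial of `R` restricts to the lines as a fixed monomial in `s, w` whose coefficients are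
the values of a binary monomial of the same degree. -/
lemma coeffVec_Phi_mem (a b : Fin r → K) {t k : ℕ} (hk : k ≤ t) (f : Rp K) :
    coeffVec a b t k (Phi (fun i => quadLine (a i) (b i)) f) ∈ valSpace a b t := by
  have key : ∀ g : Rp K, coeffVec a b t k (Phi (fun i => quadLine (a i) (b i)) g) =
      fun i => coeff (expo t k) (lineEval (a i) (b i) g) := fun g => rfl
  induction f using MvPolynomial.induction_on' with
  | monomial m c =>
    rw [key]
    simp only [lineEval_monomial, coeff_monomial]
    by_cases h : (Finsupp.single 0 (m 0 + m 1) + Finsupp.single 1 (m 2 + m 3) : Fin 2 →₀ ℕ)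
        = expo t k
    · simp only [if_pos h]
      have h0 : m 0 + m 1 = k := by simpa [expo] using DFunLike.congr_fun h 0
      have h1 : m 2 + m 3 = t - k := by simpa [expo] using DFunLike.congr_fun h 1
      have := Submodule.smul_mem _ c (valVec_mem a b (by omega : m 0 + m 2 ≤ t))
      convert this using 1
      ext i
      have : t - (m 0 + m 2) = m 1 + m 3 := by omega
      simp [valVec, this]
    · simp only [h, if_false]
      exact Submodule.zero_mem _
  | add p q hp hq =>
    rw [map_add, map_add]
    exact Submodule.add_mem _ hp hq

/-- For all `e, k ≤ t` some monomial of degree `t` restricts to every line as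
`a ^ e * b ^ (t - e)` times `s ^ k * w ^ (t - k)`. -/
lemma exists_monomial_lineEval {t e k : ℕ} (he : e ≤ t) (hk : k ≤ t) :
    ∃ f : Rp K, f.IsHomogeneous t ∧
      ∀ a b : K, lineEval a b f = monomial (expo t k) (a ^ e * b ^ (t - e)) := by
  -- exponents form a 2 × 2 table with row sums `k, t - k` and column sums `e, t - e`
  let p := min e k
  let m : Fin 4 →₀ ℕ := Finsupp.equivFunOnFinite.symm ![p, k - p, e - p, t - e - (k - p)]
  have m0 : m 0 = p := rfl
  have m1 : m 1 = k - p := rfl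
  have m2 : m 2 = e - p := rfl
  have m3 : m 3 = t - e - (k - p) := rfl
  refine ⟨monomial m 1, isHomogeneous_monomial _ ?_, fun a b => ?_⟩
  · rw [Finsupp.degree_eq_sum, Fin.sum_univ_four, m0, m1, m2, m3]
    omega
  · rw [lineEval_monomial, one_mul, m0, m1, m2, m3, expo]
    have e1 : p + (k - p) = k := by omega
    have e2 : e - p + (t - e - (k - p)) = t - k := by omega
    have e3 : p + (e - p) = e := by omega
    have e4 : k - p + (t - e - (k - p)) = t - e := by omega
    rw [e1, e2, e3, e4]

/-- Every family of value vectors of binary forms of degree `t`, one for each `s ^ k * w ^ (t - k)`,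
is the family of coefficient vectors of a form of degree `t` on `ℙ³`. -/
lemma exists_form_of_mem_valSpace (a b : Fin r → K) (t : ℕ) (v : Fin (t + 1) → Fin r → K)
    (hv : ∀ k, v k ∈ valSpace a b t) :
    ∃ f : Rp K, f.IsHomogeneous t ∧
      ∀ i (k : Fin (t + 1)), coeff (expo t k) (lineEval (a i) (b i) f) = v k i := by
  have hone : ∀ k : Fin (t + 1), ∃ f : Rp K, f.IsHomogeneous t ∧
      ∀ i, lineEval (a i) (b i) f = monomial (expo t k) (v k i) := by
    intro k
    have := hv k
    rw [valSpace] at this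
    generalize v k = x at this ⊢
    induction this using Submodule.span_induction with
    | mem x hx =>
      obtain ⟨e, rfl⟩ := hx
      obtain ⟨f, hf, h⟩ := exists_monomial_lineEval (K := K) (t := t) (e := e) (k := k)
        (by omega) (by omega)
      exact ⟨f, hf, fun i => h _ _⟩
    | zero => exact ⟨0, isHomogeneous_zero _ _ _, fun i => by simp⟩
    | add x y _ _ hx hy =>
      obtain ⟨f, hf, hf'⟩ := hx
      obtain ⟨g, hg, hg'⟩ := hy
      exact ⟨f + g, hf.add hg, fun i => by simp [hf', hg']⟩
    | smul c x _ hx =>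
      obtain ⟨f, hf, hf'⟩ := hx
      refine ⟨c • f, (homogeneousSubmodule (Fin 4) K t).smul_mem c hf, fun i => ?_⟩
      rw [map_smul, hf', smul_monomial, Pi.smul_apply]
  choose f hf hfe using hone
  refine ⟨∑ k, f k, IsHomogeneous.sum _ _ _ fun k _ => hf k, fun i k => ?_⟩
  rw [map_sum, coeff_sum, Finset.sum_eq_single k]
  · rw [hfe, coeff_monomial, if_pos rfl]
  · intro l _ hl
    rw [hfe, coeff_monomial, if_neg fun h => hl (Fin.ext (expo_injective h))]
  · simp

lemma finrank_HRcomp {a b : Fin r → K} (hnz : ∀ i, (a i, b i) ≠ (0, 0))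
    (hdist : ∀ i j, i ≠ j → a i * b j - a j * b i ≠ 0) (hr : 1 ≤ r) (t : ℕ) :
    finrank K (HRcomp (fun i => quadLine (a i) (b i)) t) = (t + 1) * (r - (t + 1)) := by
  have hF : finrank K (Fin (t + 1) → (Fin r → K) ⧸ valSpace a b t) =
      (t + 1) * (r - (t + 1)) := by
    rw [finrank_pi_fintype]
    simp [finrank_quotient_valSpace hnz hdist hr]
  rw [← hF, HRcomp]
  apply finrank_map_eq_of_ker _ _ (coeffClass a b t)
  · intro x hx
    obtain ⟨f, rfl⟩ : x ∈ LinearMap.range (Phi fun i => quadLine (a i) (b i)) :=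
      (Submodule.Quotient.mk_eq_zero _).mp hx
    rw [coeffClass_eq_zero_iff]
    exact fun k => coeffVec_Phi_mem a b (by omega) f
  · intro x hx hT
    rw [coeffClass_eq_zero_iff] at hT
    obtain ⟨f, hf, hfc⟩ := exists_form_of_mem_valSpace a b t _ hT
    refine (Submodule.Quotient.mk_eq_zero _).mpr ⟨f, ?_⟩
    funext i
    obtain ⟨g, hg, hgx⟩ := hx i (Set.mem_univ i)
    rw [← hgx]
    change (Submodule.Quotient.mk f : Rp K ⧸ quadLine (a i) (b i)) = Submodule.Quotient.mk g
    rw [Submodule.Quotient.eq]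
    apply mem_quadLine_of_lineEval (hnz i)
    rw [map_sub, sub_eq_zero]
    refine binary_form_ext (lineEval_isHomogeneous hf) (lineEval_isHomogeneous hg) fun k => ?_
    rw [hfc]
    change coeff (expo t k) (quotEval (a i) (b i) (x i)) = _
    rw [← hgx]
    rfl
  · intro y
    choose v hv using fun k => Submodule.mkQ_surjective _ (y k)
    choose c d hcd using fun i => exists_comb_eq_one (hnz i)
    -- on the `i`-th line, the binary form with coefficients `v k i`, lifted to `R`
    let h : Fin r → MvPolynomial (Fin 2) K := fun i =>
      ∑ k : Fin (t + 1), monomial (expo t k) (v k i)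
    have hh : ∀ i, (h i).IsHomogeneous t := fun i =>
      IsHomogeneous.sum _ _ _ fun k _ => isHomogeneous_monomial _ (expo_degree (by omega))
    refine ⟨fun i => Submodule.Quotient.mk (lineLift (c i) (d i) (h i)), ?_, ?_⟩
    · intro i _
      exact ⟨_, lineLift_isHomogeneous (hh i), rfl⟩
    · funext k
      rw [← hv k]
      change (valSpace a b t).mkQ _ = _
      congr 1
      funext i
      change coeff (expo t k) (lineEval (a i) (b i) (lineLift (c i) (d i) (h i))) = _
      rw [lineEval_lineLift (hcd i), coeff_sum, Finset.sum_eq_single k]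
      · rw [coeff_monomial, if_pos rfl]
      · intro l _ hl
        rw [coeff_monomial, if_neg fun h => hl (Fin.ext (expo_injective h))]
      · simp

end Hilbert

/-- For `r` pairwise disjoint lines of one ruling of the smooth quadric
`Q = V(x₀x₃ - x₁x₂)`, given by pairwise distinct points `[aᵢ:bᵢ]` of `ℙ¹`,
the Hilbert function of the Hartshorne–Rao module of their union is symmetric:
`dim [M(C)]_t = dim [M(C)]_{r-2-t}` for every integer `t`. -/
theorem stmt_12 {K : Type} [Field K] [IsAlgClosed K] [CharZero K]
    (r : ℕ) (hr : 1 ≤ r) (a b : Fin r → K)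
    (hnz : ∀ i, (a i, b i) ≠ (0, 0))
    (hdist : ∀ i j, i ≠ j → a i * b j - a j * b i ≠ 0) :
    ∀ t : ℤ, HRdim (fun i => quadLine (a i) (b i)) t =
      HRdim (fun i => quadLine (a i) (b i)) ((r : ℤ) - 2 - t) := by
  intro t
  have key := finrank_HRcomp hnz hdist hr
  simp only [HRdim, key]
  rcases lt_or_ge t 0 with ht | ht
  · rw [if_neg (by omega), if_pos (by omega)]
    have : r - (((r : ℤ) - 2 - t).toNat + 1) = 0 := by omega
    rw [this, mul_zero]
  rw [if_pos ht]
  by_cases hnonneg : 0 ≤ (r : ℤ) - 2 - t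
  · rw [if_pos hnonneg]
    -- the two factors `t + 1` and `r - (t + 1)` are exchanged
    have h1 : r - (((r : ℤ) - 2 - t).toNat + 1) = t.toNat + 1 := by omega
    have h2 : r - (t.toNat + 1) = ((r : ℤ) - 2 - t).toNat + 1 := by omega
    rw [h1, h2, mul_comm]
  · rw [if_neg hnonneg]
    have : r - (t.toNat + 1) = 0 := by omega
    rw [this, mul_zero]
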